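/- Let α be irrational with continued fraction denominators (q_n), g : 𝕋 → ℝ a C¹ function with ∫_𝕋 g dm_𝕋 = 0, c ∈ ℝ, f(x) = g(x) + {x} + c with f > 0, L = min{1, inf_𝕋 f}, M = max{1, sup_𝕋 f}, β ∈ (0,1], and let 0 < ε < βL/(10⁶M²). Let x, y ∈ 𝕋 satisfy β/(200Mq_{n+1}) < ‖x−y‖ ≤ β/(200Mq_n) for some n ≥ 1 as well as ‖x−y‖ ≤ βL/(10⁵M²), assume |g^{(m)}(x) − g^{(m)}(y)| < ε·max{1, |m|·‖x−y‖} for all m ∈ ℤ, and assume 0 ∉ ⋃_{k=0}^{⌊q_{n+1}/6⌋} R_α^k [x,y]. Then for every integer m with βL/(2·10⁵M²·‖x−y‖) ≤ m ≤ βL/(10⁵M²·‖x−y‖) one has |f^{(m)}(x) − f^{(m)}(y)| > βL/(10⁶M²). -/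

import Mathlib

/-!
The proof compares the two summands of `f = g + {·} + c` along the orbit segment of length `m`.
Since `‖x-y‖ > β/(200Mq_{n+1})`, the upper bound on `m` forces `m < q_{n+1}/500`, so the arcs
`R_α^k [x,y]` with `k < m` all avoid `0`. On an arc that avoids `0` the function `{·}` is affine with
slope `1` (`fract_add_of_no_int`), hence the sawtooth part of `f^{(m)}(y) - f^{(m)}(x)` is exactly
`m t`, where `t = ±‖x-y‖` is the signed displacement from `x` to `y` (`birkhoff_sub`).
Writing `B = βL/(10⁶M²)`, the range of `m` says `5B ≤ m‖x-y‖ ≤ 10B ≤ 1`, so the contribution of `g`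
is less than `ε < B` and the total difference exceeds `5B - B > B`.
-/


/-- Distance of a real number to the nearest integer. -/
noncomputable def normT (x : ℝ) : ℝ := |x - round x|

/-- The Birkhoff cocycle `f^{(n)}(x)` over the rotation by `α`, for `n ∈ ℤ`. -/
noncomputable def birkhoff (α : ℝ) (f : ℝ → ℝ) (n : ℤ) (x : ℝ) : ℝ :=
  if 0 ≤ n then ∑ i ∈ Finset.range n.toNat, f (x + (i : ℕ) * α)
  else -∑ i ∈ Finset.range (-n).toNat, f (x + ((n : ℝ) + (i : ℕ)) * α)

/-- `qden α n` is the denominator `q_n` of the `n`-th convergent of the continued fraction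
expansion of `α`:  `q₀ = 1`, `q₁ = a₁`, `q_n = a_n q_{n-1} + q_{n-2}`. -/
noncomputable def qden (α : ℝ) (n : ℕ) : ℝ := (GenContFract.of α).dens n

/-- `hitsZero x y` says that the point `0` of `𝕋 = ℝ/ℤ` belongs to the shortest closed arc
connecting (the projections of) `x` and `y`. -/
def hitsZero (x y : ℝ) : Prop :=
  ∃ m : ℤ, (m : ℝ) ∈ Set.uIcc x (x + (y - x - round (y - x)))

/-- On an interval with endpoints `a`, `a + t` containing no integer, the sawtooth is affine. -/
lemma fract_add_of_no_int (a t : ℝ) (h : ¬ ∃ m : ℤ, (m : ℝ) ∈ Set.uIcc a (a + t)) :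
    Int.fract (a + t) = Int.fract a + t := by
  have h1 : ((⌊a⌋ : ℤ) : ℝ) < a + t := by
    by_contra! hc
    exact h ⟨⌊a⌋, Set.mem_uIcc.2 (Or.inr ⟨hc, Int.floor_le a⟩)⟩
  have h2 : a + t < ((⌊a⌋ : ℤ) : ℝ) + 1 := by
    by_contra! hc
    refine h ⟨⌊a⌋ + 1, Set.mem_uIcc.2 (Or.inl ⟨?_, ?_⟩)⟩
    · push_cast; exact (Int.lt_floor_add_one a).le
    · push_cast; exact hc
  have h3 : ⌊a + t⌋ = ⌊a⌋ := Int.floor_eq_iff.2 ⟨h1.le, h2⟩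
  rw [Int.fract, Int.fract, h3]
  ring

lemma normT_neg (z : ℝ) : normT (-z) = normT z := by
  have key : ∀ w : ℝ, normT (-w) ≤ normT w := by
    intro w
    have h := round_le (-w) (-round w)
    have h' : |-w - ((-round w : ℤ) : ℝ)| = |w - round w| := by
      rw [← abs_neg]; congr 1; push_cast; ring
    rwa [h'] at h
  refine le_antisymm (key z) ?_
  simpa using key (-z)

lemma one_le_qden (α : ℝ) (n : ℕ) : 1 ≤ qden α n := by
  induction n with
  | zero => simp [qden]
  | succ k ih => exact ih.trans GenContFract.of_den_mono

lemma birkhoff_natCast (α : ℝ) (f : ℝ → ℝ) (m : ℕ) (x : ℝ) :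
    birkhoff α f m x = ∑ i ∈ Finset.range m, f (x + (i : ℕ) * α) := by
  simp [birkhoff]

/-- While the first `m` rotates of the arc `[x,y]` avoid `0`, the cocycles of `f` and of `g` differ
between `x` and `y` by `m` times the signed displacement from `x` to `y`. -/
lemma birkhoff_sub (α c : ℝ) (f g : ℝ → ℝ) (hf : ∀ x, f x = g x + Int.fract x + c) (x y : ℝ)
    (m : ℕ) (h : ∀ k < m, ¬ hitsZero (x + k * α) (y + k * α)) :
    birkhoff α f m y - birkhoff α f m x =
      (birkhoff α g m y - birkhoff α g m x) + m * (y - x - round (y - x)) := by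
  simp only [birkhoff_natCast]
  rw [← Finset.sum_sub_distrib, ← Finset.sum_sub_distrib]
  have hterm : ∀ k ∈ Finset.range m, f (y + k * α) - f (x + k * α) =
      (g (y + k * α) - g (x + k * α)) + (y - x - round (y - x)) := by
    intro k hk
    have h0 := h k (Finset.mem_range.1 hk)
    unfold hitsZero at h0
    rw [add_sub_add_right_eq_sub] at h0
    have h1 := fract_add_of_no_int _ _ h0
    have h2 : x + k * α + (y - x - round (y - x)) = y + k * α - (round (y - x) : ℤ) := by ring
    rw [h2, Int.fract_sub_intCast] at h1
    rw [hf, hf, h1]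
    ring
  rw [Finset.sum_congr rfl hterm, Finset.sum_add_distrib]
  rw [Finset.sum_const, Finset.card_range, nsmul_eq_mul, Finset.sum_sub_distrib]

/-- Case (B), lower bound: if `β/(200Mq_{n+1}) < ‖x-y‖ ≤ β/(200Mq_n)`,
`‖x-y‖ ≤ βL/(10⁵M²)`, the `C¹` part satisfies `|g^{(m)}(x) - g^{(m)}(y)| < ε·max{1, |m|‖x-y‖}`
for all `m` with `0 < ε < βL/(10⁶M²)`, and the forward orbit of `[x,y]` avoids `0` up to time
`⌊q_{n+1}/6⌋`, then `|f^{(m)}(x) - f^{(m)}(y)| > βL/(10⁶M²)` for all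
`βL/(2·10⁵M²‖x-y‖) ≤ m ≤ βL/(10⁵M²‖x-y‖)`. -/
theorem caseB_cocycle_lower_bound
    (α : ℝ) (hα : Irrational α)
    (g : ℝ → ℝ) (hper : Function.Periodic g 1) (hg : ContDiff ℝ 1 g)
    (hint : ∫ x in (0:ℝ)..1, g x = 0) (c : ℝ)
    (f : ℝ → ℝ) (hf : ∀ x, f x = g x + Int.fract x + c) (hfpos : ∀ x, 0 < f x)
    (L M : ℝ) (hL : L = min 1 (sInf (Set.range f))) (hM : M = max 1 (sSup (Set.range f)))
    (β : ℝ) (hβ : 0 < β) (hβ1 : β ≤ 1)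
    (ε : ℝ) (hε0 : 0 < ε) (hε : ε < β * L / (10 ^ 6 * M ^ 2))
    (x y : ℝ) (n : ℕ) (hn : 1 ≤ n)
    (hd1 : β / (200 * M * qden α (n + 1)) < normT (x - y))
    (hd2 : normT (x - y) ≤ β / (200 * M * qden α n))
    (hd3 : normT (x - y) ≤ β * L / (10 ^ 5 * M ^ 2))
    (hgxy : ∀ m : ℤ, |birkhoff α g m x - birkhoff α g m y|
      < ε * max 1 (|(m : ℝ)| * normT (x - y)))
    (havoid : ∀ k : ℕ, (k : ℝ) ≤ (⌊qden α (n + 1) / 6⌋ : ℤ) →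
      ¬ hitsZero (x + k * α) (y + k * α)) :
    ∀ m : ℕ, β * L / (2 * 10 ^ 5 * M ^ 2 * normT (x - y)) ≤ (m : ℝ) →
      (m : ℝ) ≤ β * L / (10 ^ 5 * M ^ 2 * normT (x - y)) →
      |birkhoff α f m x - birkhoff α f m y| > β * L / (10 ^ 6 * M ^ 2) := by
  intro m hm1 hm2
  have hM1 : 1 ≤ M := hM ▸ le_max_left _ _
  have hL1 : L ≤ 1 := hL ▸ min_le_left _ _
  have hM0 : 0 < M := by linarith
  have hq : 1 ≤ qden α (n + 1) := one_le_qden α (n + 1)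
  have hB0 : 0 < β * L / (10 ^ 6 * M ^ 2) := hε0.trans hε
  have hδ : 0 < normT (x - y) := lt_trans (by positivity) hd1
  set δ := normT (x - y) with hδdef
  set q := qden α (n + 1) with hqdef
  set B := β * L / (10 ^ 6 * M ^ 2) with hB
  have hBM : B * (10 ^ 6 * M ^ 2) = β * L := by rw [hB]; field_simp
  have hβL : β * L ≤ β := by nlinarith
  have hM2 : 1 ≤ M ^ 2 := one_le_pow₀ hM1
  have hlow : 5 * B ≤ m * δ := by
    rw [div_le_iff₀ (by positivity)] at hm1
    have : 0 < M ^ 2 := by positivity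
    nlinarith
  have hup : m * δ ≤ 10 * B := by
    rw [le_div_iff₀ (by positivity)] at hm2
    have : 0 < M ^ 2 := by positivity
    nlinarith
  have hB1 : 10 * B ≤ 1 := by nlinarith
  -- multiplying `m δ ≤ 10 B` by `200 M q` and using `β < 200 M q δ` cancels `δ` and `β`
  have hmq : (m : ℝ) ≤ q / 6 := by
    rw [div_lt_iff₀ (by positivity)] at hd1
    have hMB : 10 ^ 6 * (M * B) ≤ β := by nlinarith
    have h1 : (m : ℝ) * β ≤ m * (δ * (200 * M * q)) :=
      mul_le_mul_of_nonneg_left hd1.le (Nat.cast_nonneg m)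
    have h2 : (m * δ) * (200 * M * q) ≤ 10 * B * (200 * M * q) :=
      mul_le_mul_of_nonneg_right hup (by positivity)
    have h3 : 10 ^ 6 * (M * B) * q ≤ β * q := mul_le_mul_of_nonneg_right hMB (by linarith)
    have h4 : β * m ≤ β * (q / 6) := by nlinarith [mul_pos hβ (by linarith : 0 < q)]
    exact le_of_mul_le_mul_left h4 hβ
  have hdiff := birkhoff_sub α c f g hf x y m (fun k hk => havoid k (by
    have hk' : (k : ℝ) ≤ q / 6 := le_trans (by exact_mod_cast hk.le) hmq
    have : (k : ℤ) ≤ ⌊q / 6⌋ := Int.le_floor.2 (by exact_mod_cast hk')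
    exact_mod_cast this))
  have ht : |y - x - round (y - x)| = δ := by
    rw [hδdef, ← normT_neg, neg_sub]; rfl
  have hg' := hgxy m
  rw [max_eq_left (by simpa using hup.trans hB1), mul_one] at hg'
  set t := y - x - round (y - x)
  have htm : |(m : ℝ) * t| = m * δ := by rw [abs_mul, ht, Nat.abs_cast]
  have htri : |(m : ℝ) * t| ≤ |birkhoff α f m x - birkhoff α f m y| +
      |birkhoff α g m x - birkhoff α g m y| := by
    have : (m : ℝ) * t = -(birkhoff α f m x - birkhoff α f m y) +
        (birkhoff α g m x - birkhoff α g m y) := by linarith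
    rw [this, ← abs_neg (birkhoff α f m x - birkhoff α f m y)]
    exact abs_add_le _ _
  linarith
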